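/- Let R be a commutative ring and f : Fin m → R with [f 0, …, f (m−1)] a regular sequence, let F ∈ Ideal.span (Set.range f), let Λ := ExteriorAlgebra R (Fin m → R) with exterior-degree components Λ^k, and let d_K be the Koszul differential (left contraction with φ_f (x) = ∑ i, f i * x i). Suppose δ, δ' : Λ →ₗ[R] Λ both map each Λ^k into the span of the components Λ^j with j > k and j − k odd, and both D := d_K + δ and D' := d_K + δ' satisfy D ∘ D = F • LinearMap.id and D' ∘ D' = F • LinearMap.id. Then there exists an R-linear map ν : Λ →ₗ[R] Λ mapping each Λ^k into the span of the components Λ^j with j > k, such that LinearMap.id + ν is bijective and (LinearMap.id + ν) ∘ D = D' ∘ (LinearMap.id + ν); in particular the two matrix factorizations (Λ, D) and (Λ, D') are isomorphic. -/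

import Mathlib

/-!
The Koszul complex `(Λ, d)` of a regular sequence `f` is a bounded free resolution, so the complex
of endomorphisms of `Λ` has no homology in positive degrees (`GradedResolution.exists_homotopy`).
Consequently `id + ν` can be built by successive approximation. If the error
`E = (id + ν) D - D' (id + ν)` raises degree by at least `p ≥ 1`, then
`D' E + E D = (id + ν) D² - D'² (id + ν) = 0`, because both squares are the same scalar `F`.
In lowest degree this says that the degree-`p` part `E_p` of `E` anticommutes with `d`, hence
`E_p = d H - H d` with `H` raising degree by `p + 1`. Replacing `ν` by `ν + H` makes the error raise
degree by at least `p + 1`. As `Λ` lives in degrees `0, …, m`, the error eventually vanishes, and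
for the same reason `ν` is nilpotent, so `id + ν` is invertible.

Exactness of the Koszul complex (`exact_extSub`) is proved by adding one generator `e_n` at a time,
using that `f_n` is a nonzerodivisor modulo `(f_0, …, f_(n-1))`.
-/

open ExteriorAlgebra

namespace KoszulMF

/-! ### Deforming the differential of a graded resolution -/

/-- The data of the Koszul resolution that the argument uses: a family of orthogonal projections
`π i` onto the graded pieces of a module `L`, concentrated in degrees `0, …, m`, and a differential
`d` of degree `-1` which is exact in positive degrees. Degree-`k` elements are written `π k x`.
Exactness is stated for possibly inhomogeneous cycles with vanishing degree-zero component. -/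
structure GradedResolution {R L : Type*} [CommRing R] [AddCommGroup L] [Module R L]
    (m : ℕ) (π : ℕ → Module.End R L) (d : Module.End R L) : Prop where
  proj_self : ∀ i x, π i (π i x) = π i x
  proj_ne : ∀ i j x, i ≠ j → π i (π j x) = 0
  sum_proj : ∀ x, ∑ i ∈ Finset.range (m + 1), π i x = x
  d_succ : ∀ k x, d (π (k + 1) x) = π k (d x)
  d_zero : ∀ x, d (π 0 x) = 0
  d_d : ∀ x, d (d x) = 0
  exact : ∀ x, d x = 0 → π 0 x = 0 → ∃ y, d y = x

section Abstract

variable {R L : Type*} [CommRing R] [AddCommGroup L] [Module R L]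
  {m : ℕ} {π : ℕ → Module.End R L} {d : Module.End R L}

/-- `A` raises degree by at least `p`: for `x` of degree `k`, all components of `A x` in degrees below
`k + p` vanish. -/
def Fil (π : ℕ → Module.End R L) (p : ℕ) (A : Module.End R L) : Prop :=
  ∀ k i x, i < k + p → π i (A (π k x)) = 0

theorem Fil.add {p : ℕ} {A B : Module.End R L} (hA : Fil π p A) (hB : Fil π p B) :
    Fil π p (A + B) := fun k i x h => by simp [hA k i x h, hB k i x h]

theorem Fil.sub {p : ℕ} {A B : Module.End R L} (hA : Fil π p A) (hB : Fil π p B) :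
    Fil π p (A - B) := fun k i x h => by simp [hA k i x h, hB k i x h]

theorem Fil.mono {p q : ℕ} {A : Module.End R L} (hA : Fil π p A) (h : q ≤ p) :
    Fil π q A := fun k i x hi => hA k i x (by omega)

namespace GradedResolution

variable (h : GradedResolution m π d)
include h

theorem ext_proj {A B : Module.End R L} (hAB : ∀ k x, A (π k x) = B (π k x)) : A = B := by
  ext x
  rw [← h.sum_proj x, map_sum, map_sum]
  exact Finset.sum_congr rfl fun k _ => hAB k x

theorem ext_proj_left {x y : L} (hxy : ∀ k, π k x = π k y) : x = y := by
  rw [← h.sum_proj x, ← h.sum_proj y]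
  exact Finset.sum_congr rfl fun k _ => hxy k

theorem proj_eq_zero {i : ℕ} (hi : m < i) (x : L) : π i x = 0 := by
  rw [← h.sum_proj x, map_sum]
  refine Finset.sum_eq_zero fun k hk => h.proj_ne _ _ _ ?_
  have := Finset.mem_range.1 hk
  omega

theorem fil_mul {p q : ℕ} {A B : Module.End R L} (hA : Fil π p A) (hB : Fil π q B) :
    Fil π (p + q) (A * B) := fun k i x hi => by
  rw [Module.End.mul_apply, ← h.sum_proj (B (π k x)), map_sum, map_sum]
  refine Finset.sum_eq_zero fun j _ => ?_
  by_cases hj : j < k + q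
  · rw [hB k j x hj, map_zero, map_zero]
  · exact hA j i _ (by omega)

theorem eq_zero_of_fil {p : ℕ} (hp : m < p) {A : Module.End R L} (hA : Fil π p A) : A = 0 :=
  h.ext_proj fun k x => h.ext_proj_left fun i => by
    by_cases hi : i < k + p
    · simp [hA k i x hi]
    · simp [h.proj_eq_zero (show m < i by omega)]

/-- The homogeneous component of degree exactly `p` of an endomorphism. -/
theorem exists_lead (p : ℕ) (A : Module.End R L) : ∃ T : Module.End R L,
    ∀ k x, T (π k x) = π (k + p) (A (π k x)) := by
  refine ⟨∑ k ∈ Finset.range (m + 1), π (k + p) * A * π k, fun k x => ?_⟩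
  rw [LinearMap.sum_apply, Finset.sum_eq_single k]
  · simp [h.proj_self]
  · intro j _ hj
    simp [h.proj_ne _ _ _ hj]
  · intro hk
    have : m < k := by simpa using hk
    simp [h.proj_eq_zero this]

/-- An endomorphism with values in cycles of zero degree-zero component factors through `d`, because
`L` is projective. -/
theorem exists_lift [Module.Projective R L] (T : Module.End R L) (hd : ∀ x, d (T x) = 0)
    (h0 : ∀ x, π 0 (T x) = 0) : ∃ G : Module.End R L, ∀ x, d (G x) = T x := by
  have hr : ∀ x, T x ∈ LinearMap.range d := fun x => h.exact _ (hd x) (h0 x)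
  obtain ⟨G, hG⟩ := Module.projective_lifting_property d.rangeRestrict
    (T.codRestrict (LinearMap.range d) hr) d.surjective_rangeRestrict
  exact ⟨G, fun x => congrArg Subtype.val (LinearMap.congr_fun hG x)⟩

/-- Vanishing of the homology of `End L` in positive degrees: if `T` is homogeneous of degree `p ≥ 1`
and anticommutes with `d`, then `T = d H - H d` for some `H` homogeneous of degree `p + 1`. The sign
convention makes the parity of `p` irrelevant. `H` is built one source degree at a time. -/
theorem exists_homotopy [Module.Projective R L] {p : ℕ} (hp : 1 ≤ p) (T : Module.End R L)
    (hT : ∀ k x, T (π k x) = π (k + p) (T (π k x)))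
    (hdT : ∀ x, d (T x) + T (d x) = 0) :
    ∃ H : Module.End R L, (∀ k x, H (π k x) = π (k + (p + 1)) (H (π k x))) ∧
      ∀ x, d (H x) - H (d x) = T x := by
  have key : ∀ n : ℕ, ∃ H : Module.End R L,
      (∀ k x, H (π k x) = π (k + (p + 1)) (H (π k x))) ∧
      ∀ k < n, ∀ x, d (H (π k x)) - H (d (π k x)) = T (π k x) := by
    intro n
    induction n with
    | zero => exact ⟨0, by simp, by simp⟩
    | succ n ih =>
      obtain ⟨H, hH, hn⟩ := ih
      -- `T + H d` takes values in cycles on degree `n`, since `d H = T + H d` in degree `n - 1`.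
      have hHd : ∀ x, d (H (d (π n x))) = T (d (π n x)) := by
        intro x
        rcases n with _ | n
        · simp [h.d_zero]
        · have := hn n (by omega) (d x)
          rw [← h.d_succ, h.d_d, map_zero, sub_zero] at this
          exact this
      have hdeg : ∀ x, H (d (π n x)) = π (n + p) (H (d (π n x))) := by
        intro x
        rcases n with _ | n
        · simp [h.d_zero]
        · have := hH n (d x)
          rw [← h.d_succ, show n + (p + 1) = n + 1 + p by omega] at this
          exact this
      obtain ⟨G, hG⟩ := h.exists_lift ((T + H * d) * π n)
        (fun x => by
          simp only [Module.End.mul_apply, LinearMap.add_apply, map_add, hHd]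
          exact hdT _)
        (fun x => by
          simp only [Module.End.mul_apply, LinearMap.add_apply, map_add]
          rw [hT, hdeg, h.proj_ne _ _ _ (by omega), h.proj_ne _ _ _ (by omega), add_zero])
      simp only [Module.End.mul_apply, LinearMap.add_apply] at hG
      -- In source degree `n` the map `H` is replaced by the homogeneous part of the lift `G` of
      -- `T + H d`; the other source degrees are unchanged.
      refine ⟨H * (1 - π n) + π (n + (p + 1)) * G * π n, fun k x => ?_, fun k hk x => ?_⟩
      · by_cases hkn : k = n
        · subst hkn
          simp [h.proj_self]
        · simp only [LinearMap.add_apply, Module.End.mul_apply, LinearMap.sub_apply,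
            Module.End.one_apply, h.proj_ne n k x (Ne.symm hkn), map_zero, sub_zero, add_zero]
          exact hH k x
      · have hdk : ∀ B : Module.End R L, B (π n (d (π k x))) = 0 := by
          intro B
          rcases k with _ | k
          · simp [h.d_zero]
          · rw [h.d_succ, h.proj_ne _ _ _ (by omega), map_zero]
        have hdk' := hdk 1
        rw [Module.End.one_apply] at hdk'
        by_cases hkn : k = n
        · subst hkn
          simp only [LinearMap.add_apply, Module.End.mul_apply, LinearMap.sub_apply,
            Module.End.one_apply, h.proj_self, hdk', map_zero, sub_self, sub_zero, add_zero,
            zero_add]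
          rw [show k + (p + 1) = (k + p) + 1 by omega, h.d_succ, hG, h.proj_self, map_add,
            ← hT, ← hdeg, add_sub_cancel_right]
        · simp only [LinearMap.add_apply, Module.End.mul_apply, LinearMap.sub_apply,
            Module.End.one_apply, h.proj_ne n k x (Ne.symm hkn), hdk', map_zero, sub_zero,
            add_zero]
          exact hn k (by omega) x
  obtain ⟨H, hH, hn⟩ := key (m + 1)
  refine ⟨H, hH, fun x => ?_⟩
  have : d * H - H * d = T := h.ext_proj fun k x => by
    by_cases hk : k < m + 1
    · simpa using hn k hk x
    · simp [h.proj_eq_zero (show m < k by omega)]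
  simpa using LinearMap.congr_fun this x

/-- Killing the leading term: an error `E` raising degree by at least `p`, whose degree-`p` part
anticommutes with `d`, can be pushed one step deeper into the filtration. -/
theorem exists_correction [Module.Projective R L] {p : ℕ} (hp : 1 ≤ p) (E : Module.End R L)
    (hE : Fil π p E) (hdE : Fil π p (d * E + E * d)) :
    ∃ H : Module.End R L, Fil π (p + 1) H ∧ Fil π (p + 1) (E + (H * d - d * H)) := by
  obtain ⟨T, hT⟩ := h.exists_lead p E
  have hT' : ∀ k x, T (π k x) = π (k + p) (T (π k x)) := fun k x => by
    rw [hT, h.proj_self]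
  have hdT : d * T + T * d = 0 := h.ext_proj fun k x => by
    obtain ⟨q, rfl⟩ : ∃ q, p = q + 1 := ⟨p - 1, by omega⟩
    have h1 := hdE k (k + q) x (by omega)
    simp only [LinearMap.add_apply, Module.End.mul_apply, map_add] at h1
    simp only [LinearMap.add_apply, Module.End.mul_apply, LinearMap.zero_apply]
    rw [hT, ← add_assoc, h.d_succ]
    rcases k with _ | k
    · simpa [h.d_zero] using h1
    · rw [h.d_succ k] at h1 ⊢
      rw [hT, show k + (q + 1) = k + 1 + q by omega]
      exact h1
  obtain ⟨H, hH, hHT⟩ := h.exists_homotopy hp T hT' fun x => by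
    simpa using LinearMap.congr_fun hdT x
  refine ⟨H, fun k i x hi => ?_, fun k i x hi => ?_⟩
  · rw [hH, h.proj_ne _ _ _ (by omega)]
  · have h2 : E (π k x) + (H (d (π k x)) - d (H (π k x))) = E (π k x) - T (π k x) := by
      rw [← hHT]; abel
    simp only [LinearMap.add_apply, Module.End.mul_apply, LinearMap.sub_apply]
    rw [h2, hT, map_sub]
    by_cases hik : i = k + p
    · subst hik
      rw [h.proj_self, sub_self]
    · rw [hE k i x (by omega), h.proj_ne _ _ _ hik, sub_zero]

/-- Two deformations of `d` by degree-raising terms, both squaring to the same scalar, are conjugate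
by a unipotent automorphism. -/
theorem exists_iso [Module.Projective R L] (F : R) (δ δ' : Module.End R L)
    (hδ : Fil π 1 δ) (hδ' : Fil π 1 δ')
    (hD : (d + δ) * (d + δ) = F • (1 : Module.End R L))
    (hD' : (d + δ') * (d + δ') = F • (1 : Module.End R L)) :
    ∃ ν : Module.End R L, Fil π 1 ν ∧ IsUnit (1 + ν) ∧
      (1 + ν) * (d + δ) = (d + δ') * (1 + ν) := by
  have key : ∀ p : ℕ, ∃ ν : Module.End R L, Fil π 1 ν ∧
      Fil π (p + 1) ((1 + ν) * (d + δ) - (d + δ') * (1 + ν)) := by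
    intro p
    induction p with
    | zero =>
      refine ⟨0, fun k i x _ => by simp, ?_⟩
      have : (1 + 0) * (d + δ) - (d + δ') * (1 + 0) = δ - δ' := by noncomm_ring
      rw [this]
      exact hδ.sub hδ'
    | succ p ih =>
      obtain ⟨ν, hν, hE⟩ := ih
      set E := (1 + ν) * (d + δ) - (d + δ') * (1 + ν) with hEdef
      -- The error is a cycle because the scalar `F` commutes with `1 + ν`.
      have hcl : (d + δ') * E + E * (d + δ) = 0 := by
        have : (d + δ') * E + E * (d + δ)
            = (1 + ν) * ((d + δ) * (d + δ)) - ((d + δ') * (d + δ')) * (1 + ν) := by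
          rw [hEdef]; noncomm_ring
        rw [this, hD, hD']
        simp
      have hdE : d * E + E * d = 0 - (δ' * E + E * δ) := by
        rw [← hcl]; noncomm_ring
      obtain ⟨H, hH, hEH⟩ := h.exists_correction (p := p + 1) (by omega) E hE (by
        rw [hdE]
        refine Fil.sub (fun k i x _ => by simp) (Fil.add ?_ ?_)
        · exact (h.fil_mul hδ' hE).mono (by omega)
        · exact (h.fil_mul hE hδ).mono (by omega))
      refine ⟨ν + H, hν.add (hH.mono (by omega)), ?_⟩
      have : (1 + (ν + H)) * (d + δ) - (d + δ') * (1 + (ν + H))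
          = (E + (H * d - d * H)) + (H * δ - δ' * H) := by
        rw [hEdef]; noncomm_ring
      rw [this]
      exact hEH.add (((h.fil_mul hH hδ).mono (by omega)).sub
        ((h.fil_mul hδ' hH).mono (by omega)))
  obtain ⟨ν, hν, hE⟩ := key m
  refine ⟨ν, hν, ?_, sub_eq_zero.1 (h.eq_zero_of_fil (by omega) hE)⟩
  have hpow : ∀ n : ℕ, Fil π n (ν ^ n) := by
    intro n
    induction n with
    | zero => exact fun k i x hi => by simpa using h.proj_ne i k x (by omega)
    | succ n ih => rw [pow_succ]; exact h.fil_mul ih hν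
  exact IsNilpotent.isUnit_one_add ⟨m + 1, h.eq_zero_of_fil (by omega) (hpow (m + 1))⟩

end GradedResolution
end Abstract

/-! ### Acyclicity of the Koszul complex -/

section Koszul
variable {R : Type*} [CommRing R] {m : ℕ}

local notation "Λ" => ExteriorAlgebra R (Fin m → R)

/-- The `n`-th standard basis vector of `R ^ m`, indexed by a natural number; it is zero for
`n ≥ m`. -/
def vec (R : Type*) [CommRing R] (m n : ℕ) : Fin m → R := fun i => if (i : ℕ) = n then 1 else 0

/-- The exterior generator `e_n`, image of the `n`-th standard basis vector. -/
noncomputable def gen (R : Type*) [CommRing R] (m n : ℕ) : ExteriorAlgebra R (Fin m → R) :=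
  ι R (vec R m n)

/-- The exterior subalgebra on `e_0, …, e_(n-1)`, as a submodule, built by
`Λ_(n+1) = Λ_n + e_n Λ_n`. -/
noncomputable def extSub (R : Type*) [CommRing R] (m : ℕ) :
    ℕ → Submodule R (ExteriorAlgebra R (Fin m → R))
  | 0 => 1
  | n + 1 => extSub R m n ⊔ (extSub R m n).map (LinearMap.mulLeft R (gen R m n))

/-- The ideal generated by `g 0, …, g (n - 1)`. -/
def idl (g : ℕ → R) : ℕ → Ideal R
  | 0 => ⊥
  | n + 1 => idl g n ⊔ Ideal.span {g n}

theorem mem_extSub_succ {n : ℕ} {x : Λ} :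
    x ∈ extSub R m (n + 1) ↔ ∃ a ∈ extSub R m n, ∃ b ∈ extSub R m n, x = a + gen R m n * b := by
  simp only [extSub, Submodule.mem_sup, Submodule.mem_map, LinearMap.mulLeft_apply]
  constructor
  · rintro ⟨a, ha, _, ⟨b, hb, rfl⟩, rfl⟩
    exact ⟨a, ha, b, hb, rfl⟩
  · rintro ⟨a, ha, b, hb, rfl⟩
    exact ⟨a, ha, _, ⟨b, hb, rfl⟩, rfl⟩

theorem extSub_mono (n : ℕ) : extSub R m n ≤ extSub R m (n + 1) := le_sup_left

theorem algebraMap_mem_extSub (n : ℕ) (r : R) : algebraMap R Λ r ∈ extSub R m n := by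
  induction n with
  | zero => exact Submodule.algebraMap_mem r
  | succ n ih => exact extSub_mono n ih

theorem contract_gen_mul (φ : Module.Dual R (Fin m → R)) (n : ℕ) (b : Λ) :
    CliffordAlgebra.contractLeft φ (gen R m n * b)
      = φ (vec R m n) • b - gen R m n * CliffordAlgebra.contractLeft φ b :=
  CliffordAlgebra.contractLeft_ι_mul φ (vec R m n) b

theorem contract_mem_extSub (φ : Module.Dual R (Fin m → R)) (n : ℕ) :
    ∀ x ∈ extSub R m n, CliffordAlgebra.contractLeft φ x ∈ extSub R m n := by
  induction n with
  | zero =>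
    intro x hx
    obtain ⟨r, rfl⟩ := Submodule.mem_one.1 hx
    rw [show CliffordAlgebra.contractLeft φ (algebraMap R Λ r) = 0 from
      CliffordAlgebra.contractLeft_algebraMap _ φ r]
    exact zero_mem _
  | succ n ih =>
    intro x hx
    obtain ⟨a, ha, b, hb, rfl⟩ := mem_extSub_succ.1 hx
    refine mem_extSub_succ.2 ⟨CliffordAlgebra.contractLeft φ a + φ (vec R m n) • b,
      add_mem (ih a ha) (Submodule.smul_mem _ _ hb), -CliffordAlgebra.contractLeft φ b,
      neg_mem (ih b hb), ?_⟩
    rw [map_add, contract_gen_mul, mul_neg]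
    abel

theorem contract_eq_zero (φ : Module.Dual R (Fin m → R)) (n : ℕ)
    (hφ : ∀ k < n, φ (vec R m k) = 0) :
    ∀ x ∈ extSub R m n, CliffordAlgebra.contractLeft φ x = 0 := by
  induction n with
  | zero =>
    intro x hx
    obtain ⟨r, rfl⟩ := Submodule.mem_one.1 hx
    exact CliffordAlgebra.contractLeft_algebraMap _ φ r
  | succ n ih =>
    intro x hx
    obtain ⟨a, ha, b, hb, rfl⟩ := mem_extSub_succ.1 hx
    have ih' := ih fun k hk => hφ k (by omega)
    rw [map_add, contract_gen_mul, ih' a ha, ih' b hb, hφ n (by omega)]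
    simp

/-- The sum `Λ_n + e_n Λ_n` is direct: contraction with the `n`-th coordinate kills `Λ_n` and maps
`e_n b` to `b`. -/
theorem eq_zero_of_add_gen_mul {n : ℕ} (hn : n < m) {a b : Λ} (ha : a ∈ extSub R m n)
    (hb : b ∈ extSub R m n) (hab : a + gen R m n * b = 0) : a = 0 ∧ b = 0 := by
  have hz := contract_eq_zero (LinearMap.proj ⟨n, hn⟩ : Module.Dual R (Fin m → R)) n
    (fun k hk => by simp [vec]; omega)
  have h1 := congrArg
    (CliffordAlgebra.contractLeft (LinearMap.proj ⟨n, hn⟩ : Module.Dual R (Fin m → R))) hab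
  rw [map_add, contract_gen_mul, hz a ha, hz b hb, map_zero] at h1
  have hb0 : b = 0 := by simpa [vec] using h1
  refine ⟨?_, hb0⟩
  simpa [hb0] using hab

theorem gen_mul_mem_extSub {n k : ℕ} (hk : k < n) :
    ∀ x ∈ extSub R m n, gen R m k * x ∈ extSub R m n := by
  induction n with
  | zero => omega
  | succ n ih =>
    intro x hx
    obtain ⟨a, ha, b, hb, rfl⟩ := mem_extSub_succ.1 hx
    by_cases hkn : k = n
    · subst hkn
      refine mem_extSub_succ.2 ⟨0, zero_mem _, a, ha, ?_⟩
      rw [mul_add, ← mul_assoc, gen, ι_sq_zero]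
      simp
    · have hk' : k < n := by omega
      refine mem_extSub_succ.2 ⟨gen R m k * a, ih hk' a ha, -(gen R m k * b),
        neg_mem (ih hk' b hb), ?_⟩
      have hanti : gen R m k * gen R m n = -(gen R m n * gen R m k) :=
        eq_neg_of_add_eq_zero_left (ι_add_mul_swap _ _)
      rw [mul_add, ← mul_assoc, hanti]
      noncomm_ring

theorem mem_extSub_top (x : Λ) : x ∈ extSub R m m := by
  refine CliffordAlgebra.left_induction (0 : QuadraticForm R (Fin m → R))
    (P := fun x => x ∈ extSub R m m) (algebraMap_mem_extSub m) (fun _ _ => add_mem) (fun x v hx => ?_) x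
  have hv : v = ∑ i : Fin m, v i • vec R m i := by
    ext j
    simp [vec, Fin.val_inj]
  change ι R v * x ∈ _
  rw [hv, map_sum, Finset.sum_mul]
  refine sum_mem fun i _ => ?_
  rw [map_smul, smul_mul_assoc]
  exact Submodule.smul_mem _ _ (gen_mul_mem_extSub i.2 x hx)

variable (φ : Module.Dual R (Fin m → R))

local notation "dK" => (CliffordAlgebra.contractLeft φ : Module.End R Λ)
local notation "aug" => (algebraMapInv : Λ →ₐ[R] R)

theorem aug_gen_mul (n : ℕ) (b : Λ) : aug (gen R m n * b) = 0 := by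
  simp [gen, algebraMapInv]

theorem d_algebraMap (r : R) : dK (algebraMap R Λ r) = 0 :=
  CliffordAlgebra.contractLeft_algebraMap _ φ r

theorem aug_d_mem (n : ℕ) :
    ∀ x ∈ extSub R m n, aug (dK x) ∈ idl (fun k => φ (vec R m k)) n := by
  induction n with
  | zero =>
    intro x hx
    obtain ⟨r, rfl⟩ := Submodule.mem_one.1 hx
    rw [d_algebraMap, map_zero]
    exact zero_mem _
  | succ n ih =>
    intro x hx
    obtain ⟨a, ha, b, hb, rfl⟩ := mem_extSub_succ.1 hx
    rw [map_add, contract_gen_mul, map_add, map_sub, aug_gen_mul, sub_zero, map_smul]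
    refine add_mem (Submodule.mem_sup_left (ih a ha)) (Submodule.mem_sup_right ?_)
    exact Ideal.mem_span_singleton.2 ⟨_, rfl⟩

theorem exists_d_eq_of_mem (n : ℕ) :
    ∀ r ∈ idl (fun k => φ (vec R m k)) n, ∃ c ∈ extSub R m n, dK c = algebraMap R Λ r := by
  induction n with
  | zero =>
    intro r hr
    have : r = 0 := hr
    exact ⟨0, zero_mem _, by simp [this]⟩
  | succ n ih =>
    intro r hr
    obtain ⟨s, hs, t, ht, rfl⟩ := Submodule.mem_sup.1 hr
    obtain ⟨u, rfl⟩ := Ideal.mem_span_singleton.1 ht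
    obtain ⟨c, hc, hcs⟩ := ih s hs
    refine ⟨c + gen R m n * algebraMap R Λ u,
      mem_extSub_succ.2 ⟨c, hc, _, algebraMap_mem_extSub n u, rfl⟩, ?_⟩
    rw [map_add, contract_gen_mul, d_algebraMap, hcs, map_add, map_mul, Algebra.smul_def]
    simp

/-- A Koszul cycle in `Λ_n` with zero scalar part is a boundary in `Λ_n`, by induction on `n`.
If `x = a + e_n b` is a cycle, then `d b = 0` and `d a = - f_n b`, so the scalar part of `b` lies in
`(f_0, …, f_(n-1))` by regularity and `b = d c`; then `a + f_n c` is a cycle in `Λ_n`, say `d y`,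
and `x = d (y - e_n c)`. -/
theorem exact_extSub (hreg : ∀ n < m, ∀ r, φ (vec R m n) * r ∈ idl (fun k => φ (vec R m k)) n →
      r ∈ idl (fun k => φ (vec R m k)) n) (n : ℕ) (hn : n ≤ m) :
    ∀ x ∈ extSub R m n, dK x = 0 → aug x = 0 → ∃ y ∈ extSub R m n, dK y = x := by
  induction n with
  | zero =>
    intro x hx _ hx0
    obtain ⟨r, rfl⟩ := Submodule.mem_one.1 hx
    rw [AlgHom.commutes] at hx0
    have : r = 0 := hx0
    exact ⟨0, zero_mem _, by simp [this]⟩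
  | succ n ih =>
    intro x hx hdx hx0
    replace ih := ih (by omega)
    obtain ⟨a, ha, b, hb, rfl⟩ := mem_extSub_succ.1 hx
    rw [map_add, aug_gen_mul, add_zero] at hx0
    have hsplit : (dK a + φ (vec R m n) • b) + gen R m n * (-dK b) = 0 := by
      rw [← hdx, map_add, contract_gen_mul, mul_neg]
      abel
    obtain ⟨h1, h2⟩ := eq_zero_of_add_gen_mul (by omega)
      (add_mem (contract_mem_extSub φ n a ha) (Submodule.smul_mem _ _ hb))
      (neg_mem (contract_mem_extSub φ n b hb)) hsplit
    rw [neg_eq_zero] at h2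
    have hbJ : aug b ∈ idl (fun k => φ (vec R m k)) n := by
      refine hreg n (by omega) _ ?_
      have h3 := congrArg aug h1
      rw [map_add, map_smul, map_zero, smul_eq_mul] at h3
      rw [eq_neg_of_add_eq_zero_right h3]
      exact neg_mem (aug_d_mem φ n a ha)
    obtain ⟨c₀, hc₀, hdc₀⟩ := exists_d_eq_of_mem φ n _ hbJ
    obtain ⟨c₁, hc₁, hdc₁⟩ := ih (b - algebraMap R Λ (aug b))
      (sub_mem hb (algebraMap_mem_extSub n _)) (by rw [map_sub, h2, d_algebraMap, sub_zero])
      (by rw [map_sub, AlgHom.commutes]; exact sub_self _)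
    -- A primitive of `b` may be changed by a scalar, so its scalar part can be taken to be zero.
    obtain ⟨c, hc, hdc, hc0⟩ : ∃ c ∈ extSub R m n, dK c = b ∧ aug c = 0 := by
      refine ⟨c₀ + c₁ - algebraMap R Λ (aug (c₀ + c₁)),
        sub_mem (add_mem hc₀ hc₁) (algebraMap_mem_extSub n _), ?_, ?_⟩
      · rw [map_sub, map_add, hdc₀, hdc₁, d_algebraMap]
        abel
      · rw [map_sub, AlgHom.commutes]; exact sub_self _
    obtain ⟨y, hy, hdy⟩ := ih (a + φ (vec R m n) • c)
      (add_mem ha (Submodule.smul_mem _ _ hc))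
      (by rw [map_add, map_smul, hdc, h1])
      (by rw [map_add, map_smul, hx0, hc0, smul_zero, add_zero])
    refine ⟨y + gen R m n * (-c), mem_extSub_succ.2 ⟨y, hy, -c, neg_mem hc, rfl⟩, ?_⟩
    rw [map_add, contract_gen_mul, hdy, map_neg, hdc, smul_neg, mul_neg]
    abel

theorem idl_eq_ofList (f : Fin m → R) (g : ℕ → R) (hg : ∀ i : Fin m, g i = f i) (n : ℕ)
    (hn : n ≤ m) : idl g n = Ideal.ofList ((List.ofFn f).take n) := by
  induction n with
  | zero => simp [idl]
  | succ n ih =>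
    have : (List.ofFn f).take (n + 1) = (List.ofFn f).take n ++ [f ⟨n, hn⟩] := by
      rw [List.take_add_one]
      simp [show n < m from hn]
    rw [this, Ideal.ofList_append, ← ih (by omega), Ideal.ofList_singleton, idl, ← hg ⟨n, hn⟩]

theorem mem_idl_of_regular (f : Fin m → R) (g : ℕ → R) (hg : ∀ i : Fin m, g i = f i)
    (hreg : RingTheory.Sequence.IsRegular R (List.ofFn f)) (n : ℕ) (hn : n < m) (r : R)
    (hr : g n * r ∈ idl g n) : r ∈ idl g n := by
  have h1 := (RingTheory.Sequence.isWeaklyRegular_iff R _).1 hreg.toIsWeaklyRegular n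
    (by simpa using hn)
  rw [isSMulRegular_quotient_iff_mem_of_smul_mem] at h1
  have h2 := h1 r
  simp only [smul_eq_mul, Ideal.mul_top, List.getElem_ofFn] at h2
  rw [← idl_eq_ofList f g hg n hn.le, ← hg ⟨n, hn⟩] at h2
  exact h2 hr

/-! ### The grading of the exterior algebra -/

/-- The projection of the exterior algebra onto its component of degree `i`. -/
noncomputable def degProj (R : Type*) [CommRing R] (m i : ℕ) :
    Module.End R (ExteriorAlgebra R (Fin m → R)) :=
  GradedAlgebra.proj (fun i : ℕ => ⋀[R]^i (Fin m → R)) i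

theorem degProj_mem (i : ℕ) (x : Λ) : degProj R m i x ∈ ⋀[R]^i (Fin m → R) :=
  SetLike.coe_mem _

theorem degProj_of_mem {i : ℕ} {x : Λ} (hx : x ∈ ⋀[R]^i (Fin m → R)) : degProj R m i x = x :=
  DirectSum.decompose_of_mem_same (fun i : ℕ => ⋀[R]^i (Fin m → R)) hx

theorem degProj_of_mem_ne {i j : ℕ} {x : Λ} (hx : x ∈ ⋀[R]^j (Fin m → R)) (hij : i ≠ j) :
    degProj R m i x = 0 :=
  DirectSum.decompose_of_mem_ne (fun i : ℕ => ⋀[R]^i (Fin m → R)) hx hij.symm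

theorem degProj_eq_zero {i : ℕ} (hi : m < i) (x : Λ) : degProj R m i x = 0 := by
  have : IsEmpty (Set.powersetCard (Fin m) i) := by
    refine ⟨fun s => ?_⟩
    have h1 := s.1.card_le_univ
    have h2 : s.1.card = i := s.2
    simp at h1
    omega
  have b := (Pi.basisFun R (Fin m)).exteriorPower i
  have hs : Subsingleton (⋀[R]^i (Fin m → R)) := b.repr.toEquiv.subsingleton
  exact congrArg Subtype.val (Subsingleton.elim
    (⟨degProj R m i x, degProj_mem i x⟩ : ⋀[R]^i (Fin m → R)) 0)

theorem sum_degProj (x : Λ) : ∑ i ∈ Finset.range (m + 1), degProj R m i x = x := by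
  classical
  conv_rhs => rw [← DirectSum.sum_support_decompose (fun i : ℕ => ⋀[R]^i (Fin m → R)) x]
  symm
  refine Finset.sum_subset (fun i hi => ?_) (fun i _ hi => ?_)
  · by_contra hlt
    have h0 := degProj_eq_zero (show m < i by simpa using hlt) x
    rw [DFinsupp.mem_support_iff] at hi
    exact hi (Subtype.ext h0)
  · rw [DFinsupp.notMem_support_iff] at hi
    exact congrArg Subtype.val hi

theorem d_mem (k : ℕ) : ∀ x ∈ ⋀[R]^(k + 1) (Fin m → R), dK x ∈ ⋀[R]^k (Fin m → R) := by
  induction k with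
  | zero =>
    intro x hx
    rw [exteriorPower, zero_add, pow_one] at hx
    obtain ⟨v, rfl⟩ := hx
    rw [show dK (ι R v) = _ from CliffordAlgebra.contractLeft_ι _ φ v, exteriorPower, pow_zero]
    exact Submodule.algebraMap_mem _
  | succ k ih =>
    intro x hx
    rw [exteriorPower, pow_succ'] at hx
    refine Submodule.mul_induction_on hx ?_ (fun x y hx hy => by
      rw [map_add]; exact add_mem hx hy)
    rintro _ ⟨v, rfl⟩ b hb
    rw [show dK (ι R v * b) = _ from CliffordAlgebra.contractLeft_ι_mul φ v b]
    refine sub_mem (Submodule.smul_mem _ _ hb) ?_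
    rw [exteriorPower, pow_succ']
    exact Submodule.mul_mem_mul ⟨v, rfl⟩ (ih b hb)

theorem d_of_mem_zero {x : Λ} (hx : x ∈ ⋀[R]^0 (Fin m → R)) : dK x = 0 := by
  rw [exteriorPower, pow_zero] at hx
  obtain ⟨r, rfl⟩ := Submodule.mem_one.1 hx
  exact d_algebraMap φ r

theorem d_degProj_succ (k : ℕ) (x : Λ) : dK (degProj R m (k + 1) x) = degProj R m k (dK x) := by
  conv_rhs => rw [← sum_degProj x, map_sum, map_sum]
  have hterm : ∀ i, degProj R m k (dK (degProj R m i x))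
      = if i = k + 1 then dK (degProj R m (k + 1) x) else 0 := by
    intro i
    rcases i with _ | i
    · rw [d_of_mem_zero φ (degProj_mem 0 x)]
      simp
    · have hi := d_mem φ i _ (degProj_mem (i + 1) x)
      split_ifs with h
      · obtain rfl : i = k := by omega
        exact degProj_of_mem hi
      · exact degProj_of_mem_ne hi (by omega)
  rw [Finset.sum_congr rfl fun i _ => hterm i, Finset.sum_ite_eq']
  split_ifs with h
  · rfl
  · rw [degProj_eq_zero (by simpa using h), map_zero]

theorem aug_eq_zero {x : Λ} (hx : degProj R m 0 x = 0) : aug x = 0 := by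
  rw [← sum_degProj x, map_sum]
  refine Finset.sum_eq_zero fun i _ => ?_
  rcases i with _ | i
  · rw [hx, map_zero]
  · have h1 := degProj_mem (i + 1) x
    rw [exteriorPower, pow_succ'] at h1
    refine Submodule.mul_induction_on h1 ?_ (fun x y hx hy => by rw [map_add, hx, hy, add_zero])
    rintro _ ⟨v, rfl⟩ b _
    simp [algebraMapInv]

theorem mem_iSup_of_degProj (P : ℕ → Prop) (x : Λ) (hx : ∀ i, ¬ P i → degProj R m i x = 0) :
    x ∈ ⨆ (j : ℕ) (_ : P j), ⋀[R]^j (Fin m → R) := by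
  rw [← sum_degProj x]
  refine sum_mem fun i _ => ?_
  by_cases hi : P i
  · exact Submodule.mem_iSup_of_mem i (Submodule.mem_iSup_of_mem hi (degProj_mem i x))
  · rw [hx i hi]
    exact zero_mem _

theorem degProj_of_mem_iSup (P : ℕ → Prop) {x : Λ}
    (hx : x ∈ ⨆ (j : ℕ) (_ : P j), ⋀[R]^j (Fin m → R)) {i : ℕ} (hi : ¬ P i) :
    degProj R m i x = 0 := by
  have : (⨆ (j : ℕ) (_ : P j), ⋀[R]^j (Fin m → R)) ≤ LinearMap.ker (degProj R m i) :=
    iSup₂_le fun j hj y hy => degProj_of_mem_ne hy (by rintro rfl; exact hi hj)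
  exact this hx

theorem gradedResolution (φ : Module.Dual R (Fin m → R))
    (hreg : ∀ n < m, ∀ r, φ (vec R m n) * r ∈ idl (fun k => φ (vec R m k)) n →
      r ∈ idl (fun k => φ (vec R m k)) n) :
    GradedResolution m (degProj R m) (CliffordAlgebra.contractLeft φ : Module.End R Λ) where
  proj_self i x := degProj_of_mem (degProj_mem i x)
  proj_ne i j x hij := degProj_of_mem_ne (degProj_mem j x) hij
  sum_proj := sum_degProj
  d_succ := d_degProj_succ φ
  d_zero x := d_of_mem_zero φ (degProj_mem 0 x)
  d_d x := CliffordAlgebra.contractLeft_contractLeft φ x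
  exact x hx h0 := by
    obtain ⟨y, -, hy⟩ := exact_extSub φ hreg m le_rfl x (mem_extSub_top x) hx (aug_eq_zero h0)
    exact ⟨y, hy⟩

end Koszul

end KoszulMF

open KoszulMF

theorem koszul_matrix_factorization_unique_up_to_iso
    {R : Type*} [CommRing R] (m : ℕ) (f : Fin m → R)
    (hreg : RingTheory.Sequence.IsRegular R (List.ofFn f))
    (F : R) (hF : F ∈ Ideal.span (Set.range f))
    (δ δ' : ExteriorAlgebra R (Fin m → R) →ₗ[R] ExteriorAlgebra R (Fin m → R))
    (hδ : ∀ (k : ℕ) (x : ExteriorAlgebra R (Fin m → R)),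
        x ∈ (LinearMap.range (ι R : (Fin m → R) →ₗ[R] ExteriorAlgebra R (Fin m → R))) ^ k →
        δ x ∈ ⨆ (j : ℕ) (_ : k < j ∧ Odd (j - k)),
          (LinearMap.range (ι R : (Fin m → R) →ₗ[R] ExteriorAlgebra R (Fin m → R))) ^ j)
    (hδ' : ∀ (k : ℕ) (x : ExteriorAlgebra R (Fin m → R)),
        x ∈ (LinearMap.range (ι R : (Fin m → R) →ₗ[R] ExteriorAlgebra R (Fin m → R))) ^ k →
        δ' x ∈ ⨆ (j : ℕ) (_ : k < j ∧ Odd (j - k)),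
          (LinearMap.range (ι R : (Fin m → R) →ₗ[R] ExteriorAlgebra R (Fin m → R))) ^ j)
    (hD : (CliffordAlgebra.contractLeft (∑ i, f i • (LinearMap.proj i : (Fin m → R) →ₗ[R] R)) + δ) ∘ₗ
        (CliffordAlgebra.contractLeft (∑ i, f i • (LinearMap.proj i : (Fin m → R) →ₗ[R] R)) + δ)
        = F • LinearMap.id)
    (hD' : (CliffordAlgebra.contractLeft (∑ i, f i • (LinearMap.proj i : (Fin m → R) →ₗ[R] R)) + δ') ∘ₗ
        (CliffordAlgebra.contractLeft (∑ i, f i • (LinearMap.proj i : (Fin m → R) →ₗ[R] R)) + δ')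
        = F • LinearMap.id) :
    ∃ ν : ExteriorAlgebra R (Fin m → R) →ₗ[R] ExteriorAlgebra R (Fin m → R),
      (∀ (k : ℕ) (x : ExteriorAlgebra R (Fin m → R)),
          x ∈ (LinearMap.range (ι R : (Fin m → R) →ₗ[R] ExteriorAlgebra R (Fin m → R))) ^ k →
          ν x ∈ ⨆ (j : ℕ) (_ : k < j),
            (LinearMap.range (ι R : (Fin m → R) →ₗ[R] ExteriorAlgebra R (Fin m → R))) ^ j) ∧
      Function.Bijective ⇑((LinearMap.id : ExteriorAlgebra R (Fin m → R) →ₗ[R] ExteriorAlgebra R (Fin m → R)) + ν) ∧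
      (LinearMap.id + ν) ∘ₗ
          (CliffordAlgebra.contractLeft (∑ i, f i • (LinearMap.proj i : (Fin m → R) →ₗ[R] R)) + δ)
        = (CliffordAlgebra.contractLeft (∑ i, f i • (LinearMap.proj i : (Fin m → R) →ₗ[R] R)) + δ') ∘ₗ
          (LinearMap.id + ν) := by
  set φ : Module.Dual R (Fin m → R) := ∑ i, f i • LinearMap.proj i with hφ
  have hg : ∀ i : Fin m, φ (vec R m i) = f i := by
    intro i
    simp [hφ, vec, Fin.val_inj]
  have hres := gradedResolution φ fun n hn r =>
    mem_idl_of_regular f (fun k => φ (vec R m k)) hg hreg n hn r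
  have hproj : Module.Projective R (ExteriorAlgebra R (Fin m → R)) :=
    Module.Projective.of_basis (Pi.basisFun R (Fin m)).ExteriorAlgebra
  have hfil : ∀ A : Module.End R (ExteriorAlgebra R (Fin m → R)),
      (∀ (k : ℕ) (x : ExteriorAlgebra R (Fin m → R)), x ∈ ⋀[R]^k (Fin m → R) →
        A x ∈ ⨆ (j : ℕ) (_ : k < j ∧ Odd (j - k)), ⋀[R]^j (Fin m → R)) →
      Fil (degProj R m) 1 A := fun A hA k i x hi =>
    degProj_of_mem_iSup (fun j => k < j ∧ Odd (j - k)) (hA k _ (degProj_mem k x)) (by omega)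
  obtain ⟨ν, hν, hunit, hcomm⟩ := hres.exists_iso F δ δ' (hfil δ hδ) (hfil δ' hδ') hD hD'
  refine ⟨ν, fun k x hx => ?_, (Module.End.isUnit_iff _).1 hunit, hcomm⟩
  refine mem_iSup_of_degProj (fun j => k < j) _ fun i hi => ?_
  rw [← degProj_of_mem hx]
  exact hν k i x (by omega)
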